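/- Let a < 0 < b and let g ∈ C¹((a,b), ℝ) satisfy x·g(x) > 0 for all x ≠ 0 in (a,b) and g'(0) > 0. Set G(x) = ∫₀^x g(s) ds and α(x) = σ(x)·√(2·G(x)), where σ is the sign function. Then lim_{x→0} g(x)/α(x) = √(g'(0)); moreover α is differentiable at 0 with α'(0) = √(g'(0)), while for x ≠ 0 one has α'(x) = σ(x)·g(x)/√(2·G(x)). -/

import Mathlib

open Set Filter Real Topology intervalIntegral

noncomputable section

/-- `G(x) = ∫₀ˣ g(s) ds`. -/
def Gfun (g : ℝ → ℝ) (x : ℝ) : ℝ := ∫ s in (0:ℝ)..x, g s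

/-- The first component `α(x) = σ(x)·√(2G(x))` of the Conti–Filippov
transformation. -/
def alphaCF (g : ℝ → ℝ) (x : ℝ) : ℝ := Real.sign x * Real.sqrt (2 * Gfun g x)

/-!
Near `0` the potential is `G(x) = g'(0) x² / 2 + o(x²)`, by one application of l'Hôpital's rule.
Since `α(x) / x = √(2 G(x) / x²)`, the difference quotient of `α` at `0` tends to `√g'(0)`, and
dividing `g(x) / x → g'(0)` by it gives the limit of `g / α`. Away from `0` the sign is locally
constant and `G > 0`, so the chain rule applies.
-/

theorem hasDerivAt_zero_iff_tendsto_div {f : ℝ → ℝ} {c : ℝ} (hf₀ : f 0 = 0) :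
    HasDerivAt f c 0 ↔ Tendsto (fun x => f x / x) (𝓝[≠] 0) (𝓝 c) := by
  simp only [hasDerivAt_iff_tendsto_slope, slope_fun_def_field, hf₀, sub_zero]

theorem apply_zero_eq_zero_of_eventually_mul_nonneg {f : ℝ → ℝ} (hf : ContinuousAt f 0)
    (hsign : ∀ᶠ x in 𝓝 0, 0 ≤ x * f x) : f 0 = 0 := by
  have hmin : IsLocalMin (fun x => x * f x) 0 := by
    simpa only [IsLocalMin, IsMinFilter, zero_mul] using hsign
  have hderiv : HasDerivAt (fun x => x * f x) (f 0) 0 := by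
    rw [hasDerivAt_zero_iff_tendsto_div (zero_mul (f 0))]
    refine (hf.tendsto.mono_left nhdsWithin_le_nhds).congr' ?_
    filter_upwards [self_mem_nhdsWithin] with x hx
    exact (mul_div_cancel_left₀ (f x) hx).symm
  exact hmin.hasDerivAt_eq_zero hderiv

theorem tendsto_two_mul_div_sq_of_hasDerivAt {F f : ℝ → ℝ} {c : ℝ}
    (hF : ∀ᶠ x in 𝓝 0, HasDerivAt F (f x) x) (hF₀ : F 0 = 0) (hf : HasDerivAt f c 0)
    (hf₀ : f 0 = 0) : Tendsto (fun x => 2 * F x / x ^ 2) (𝓝[≠] 0) (𝓝 c) := by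
  have tendsto_num : Tendsto (fun x => 2 * F x) (𝓝 0) (𝓝 0) := by
    simpa only [hF₀, mul_zero] using (hF.self_of_nhds.const_mul 2).continuousAt.tendsto
  have tendsto_den : Tendsto (fun x : ℝ => x ^ 2) (𝓝 0) (𝓝 0) := by
    simpa only [zero_pow two_ne_zero] using (continuous_pow 2).tendsto (0 : ℝ)
  have deriv_num : ∀ᶠ x in 𝓝[≠] 0, HasDerivAt (fun x => 2 * F x) (2 * f x) x :=
    (hF.filter_mono nhdsWithin_le_nhds).mono fun _ hx => hx.const_mul 2
  have deriv_den (x : ℝ) : HasDerivAt (fun x : ℝ => x ^ 2) (2 * x) x := by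
    simpa using hasDerivAt_pow 2 x
  have deriv_den_ne : ∀ᶠ x : ℝ in 𝓝[≠] 0, 2 * x ≠ 0 :=
    eventually_mem_nhdsWithin.mono fun _ hx => mul_ne_zero two_ne_zero hx
  have tendsto_deriv_div : Tendsto (fun x => 2 * f x / (2 * x)) (𝓝[≠] 0) (𝓝 c) := by
    simpa only [mul_div_mul_left _ _ (two_ne_zero' ℝ)] using
      (hasDerivAt_zero_iff_tendsto_div hf₀).1 hf
  exact HasDerivAt.lhopital_zero_nhdsNE deriv_num (.of_forall deriv_den) deriv_den_ne
    (tendsto_num.mono_left nhdsWithin_le_nhds) (tendsto_den.mono_left nhdsWithin_le_nhds)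
    tendsto_deriv_div

theorem eventually_sign_eq {x : ℝ} (hx : x ≠ 0) : ∀ᶠ y in 𝓝 x, Real.sign y = Real.sign x := by
  rcases hx.lt_or_gt with hneg | hpos
  · filter_upwards [Iio_mem_nhds hneg] with y hy
    rw [Real.sign_of_neg hneg, Real.sign_of_neg hy]
  · filter_upwards [Ioi_mem_nhds hpos] with y hy
    rw [Real.sign_of_pos hpos, Real.sign_of_pos hy]

section ContiFilippov

variable {g : ℝ → ℝ} {s : Set ℝ} {c x : ℝ}

theorem Gfun_zero (g : ℝ → ℝ) : Gfun g 0 = 0 :=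
  integral_same

theorem Gfun_pos (hint : IntervalIntegrable g MeasureTheory.volume 0 x) (hx : x ≠ 0)
    (hsign : ∀ t ∈ uIoo 0 x, 0 < t * g t) : 0 < Gfun g x := by
  rcases hx.lt_or_gt with hneg | hpos
  · have integral_neg_pos : 0 < ∫ t in x..0, -g t := by
      refine intervalIntegral_pos_of_pos_on hint.symm.neg (fun t ht => ?_) hneg
      exact neg_pos.2 (neg_of_mul_pos_right (hsign t (uIoo_of_gt hneg ▸ ht)) ht.2.le)
    rwa [integral_neg, ← integral_symm] at integral_neg_pos
  · refine intervalIntegral_pos_of_pos_on hint (fun t ht => ?_) hpos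
    exact pos_of_mul_pos_right (hsign t (uIoo_of_lt hpos ▸ ht)) ht.1.le

theorem hasDerivAt_Gfun (hs : IsOpen s) (hg : ContinuousOn g s) (hx : x ∈ s)
    (hsub : uIcc 0 x ⊆ s) : HasDerivAt (Gfun g) (g x) x :=
  integral_hasDerivAt_right (hg.mono hsub).intervalIntegrable
    (hg.stronglyMeasurableAtFilter hs x hx) (hg.continuousAt (hs.mem_nhds hx))

theorem alphaCF_zero (g : ℝ → ℝ) : alphaCF g 0 = 0 := by
  rw [alphaCF, Real.sign_zero, zero_mul]

theorem alphaCF_div_self (g : ℝ → ℝ) (x : ℝ) : alphaCF g x / x = √(2 * Gfun g x / x ^ 2) := by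
  rw [Real.sqrt_div' _ (sq_nonneg x), Real.sqrt_sq_eq_abs, alphaCF]
  rcases lt_trichotomy x 0 with hneg | rfl | hpos
  · rw [Real.sign_of_neg hneg, abs_of_neg hneg, neg_one_mul, neg_div, div_neg]
  · rw [abs_zero, div_zero, div_zero]
  · rw [Real.sign_of_pos hpos, abs_of_pos hpos, one_mul]

theorem hasDerivAt_alphaCF_zero (hG : ∀ᶠ x in 𝓝 0, HasDerivAt (Gfun g) (g x) x)
    (hg : HasDerivAt g c 0) (hg₀ : g 0 = 0) : HasDerivAt (alphaCF g) √c 0 := by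
  simpa only [hasDerivAt_zero_iff_tendsto_div (alphaCF_zero g), alphaCF_div_self] using
    (tendsto_two_mul_div_sq_of_hasDerivAt hG (Gfun_zero g) hg hg₀).sqrt

theorem tendsto_div_alphaCF (hα : HasDerivAt (alphaCF g) √c 0) (hg : HasDerivAt g c 0)
    (hg₀ : g 0 = 0) (hc : 0 < c) : Tendsto (fun x => g x / alphaCF g x) (𝓝[≠] 0) (𝓝 √c) := by
  have tendsto_quotient :
      Tendsto (fun x => g x / x / (alphaCF g x / x)) (𝓝[≠] 0) (𝓝 (c / √c)) :=
    ((hasDerivAt_zero_iff_tendsto_div hg₀).1 hg).div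
      ((hasDerivAt_zero_iff_tendsto_div (alphaCF_zero g)).1 hα) (Real.sqrt_pos.2 hc).ne'
  rw [Real.div_sqrt] at tendsto_quotient
  refine tendsto_quotient.congr' ?_
  filter_upwards [self_mem_nhdsWithin] with x hx
  exact div_div_div_cancel_right₀ hx _ _

theorem hasDerivAt_alphaCF_of_ne_zero (hG : HasDerivAt (Gfun g) c x) (hGx : Gfun g x ≠ 0)
    (hx : x ≠ 0) : HasDerivAt (alphaCF g) (Real.sign x * c / √(2 * Gfun g x)) x := by
  have locally_eq : alphaCF g =ᶠ[𝓝 x] fun y => Real.sign x * √(2 * Gfun g y) :=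
    (eventually_sign_eq hx).mono fun y hy => by rw [alphaCF, hy]
  have deriv_sqrt : HasDerivAt (fun y => √(2 * Gfun g y)) (c / √(2 * Gfun g x)) x := by
    simpa only [mul_div_mul_left _ _ (two_ne_zero' ℝ)] using
      (hG.const_mul 2).sqrt (mul_ne_zero two_ne_zero hGx)
  rw [mul_div_assoc]
  exact (deriv_sqrt.const_mul (Real.sign x)).congr_of_eventuallyEq locally_eq

end ContiFilippov

theorem statement19_general {s : Set ℝ} (hs : IsOpen s) (hconn : s.OrdConnected) (h₀ : 0 ∈ s)
    {g : ℝ → ℝ} (hg : ContinuousOn g s) (hsign : ∀ x ∈ s, x ≠ 0 → 0 < x * g x)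
    (hg' : 0 < deriv g 0) :
    Tendsto (fun x => g x / alphaCF g x) (𝓝[≠] 0) (𝓝 √(deriv g 0)) ∧
    HasDerivAt (alphaCF g) √(deriv g 0) 0 ∧
    ∀ x ∈ s, x ≠ 0 → HasDerivAt (alphaCF g) (Real.sign x * g x / √(2 * Gfun g x)) x := by
  have hsub (x : ℝ) (hx : x ∈ s) : uIcc 0 x ⊆ s := hconn.uIcc_subset h₀ hx
  have hG (x : ℝ) (hx : x ∈ s) : HasDerivAt (Gfun g) (g x) x :=
    hasDerivAt_Gfun hs hg hx (hsub x hx)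
  have hGpos (x : ℝ) (hx : x ∈ s) (hx₀ : x ≠ 0) : 0 < Gfun g x :=
    Gfun_pos (hg.mono (hsub x hx)).intervalIntegrable hx₀ fun t ht =>
      hsign t (hsub x hx (uIoo_subset_uIcc_self ht)) fun ht₀ => left_notMem_uIoo (ht₀ ▸ ht)
  have hg₀ : g 0 = 0 := by
    refine apply_zero_eq_zero_of_eventually_mul_nonneg (hg.continuousAt (hs.mem_nhds h₀)) ?_
    filter_upwards [hs.mem_nhds h₀] with x hx
    rcases eq_or_ne x 0 with rfl | hx₀
    · rw [zero_mul]
    · exact (hsign x hx hx₀).le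
  have hderiv : HasDerivAt g (deriv g 0) 0 :=
    (differentiableAt_of_deriv_ne_zero hg'.ne').hasDerivAt
  have hα : HasDerivAt (alphaCF g) √(deriv g 0) 0 :=
    hasDerivAt_alphaCF_zero (eventually_of_mem (hs.mem_nhds h₀) hG) hderiv hg₀
  exact ⟨tendsto_div_alphaCF hα hderiv hg₀ hg', hα, fun x hx hx₀ =>
    hasDerivAt_alphaCF_of_ne_zero (hG x hx) (hGpos x hx hx₀).ne' hx₀⟩

/-- for `g ∈ C¹((a,b))` with `x g(x) > 0` for `x ≠ 0` and
`g'(0) > 0`, one has `g(x)/α(x) → √(g'(0))` as `x → 0`; moreover `α` is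
differentiable at `0` with `α'(0) = √(g'(0))`, while for `x ≠ 0` in `(a,b)`,
`α'(x) = σ(x)·g(x)/√(2G(x))`. -/
theorem statement19 (a b : ℝ) (ha : a < 0) (hb : 0 < b)
    (g : ℝ → ℝ) (hg : ContDiffOn ℝ 1 g (Ioo a b))
    (hgsign : ∀ x ∈ Ioo a b, x ≠ 0 → 0 < x * g x)
    (hg0 : 0 < deriv g 0) :
    Tendsto (fun x => g x / alphaCF g x) (𝓝[(Ioo a b) \ {0}] 0)
        (𝓝 (Real.sqrt (deriv g 0))) ∧
    HasDerivAt (alphaCF g) (Real.sqrt (deriv g 0)) 0 ∧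
    ∀ x ∈ Ioo a b, x ≠ 0 →
      HasDerivAt (alphaCF g)
        (Real.sign x * g x / Real.sqrt (2 * Gfun g x)) x := by
  obtain ⟨hlim, hα⟩ :=
    statement19_general isOpen_Ioo ordConnected_Ioo ⟨ha, hb⟩ hg.continuousOn hgsign hg0
  exact ⟨hlim.mono_left (nhdsWithin_mono 0 fun _ hx => hx.2), hα⟩
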